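/- Let (X,d) be a metric space and I : X → ℝ ∪ {+∞} a proper lower semicontinuous functional. Suppose for some x ∈ D(I) there exist constants δ > 0, b > I(x), α > 0, a neighbourhood U of x, and a continuous map Ψ : (U ∩ {u ∈ D(I) : I(u) ≤ b}) × [0,α] → X such that for all (u,t) in its domain, d(Ψ(u,t),u) ≤ t and I(u) − I(Ψ(u,t)) ≥ δt. Then the weak metric slope of I at x satisfies |dI|(x) ≥ δ. -/

import Mathlib

open Set Metric Filter
open scoped ENNReal Topology

/-- A point `x` is a `δ`-regular point of the (continuous) function `J`: there are a
neighbourhood `U` of `x`, a constant `α > 0` and a continuous map `ψ : U × [0,α] → Y` with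
`d(ψ(u,t),u) ≤ t` and `J(u) - J(ψ(u,t)) ≥ δ t`. -/
def IsDeltaRegular {Y : Type*} [MetricSpace Y] (J : Y → ℝ) (x : Y) (δ : ℝ) : Prop :=
  ∃ U ∈ 𝓝 x, ∃ α : ℝ, 0 < α ∧ ∃ ψ : Y → ℝ → Y,
    ContinuousOn (fun p : Y × ℝ => ψ p.1 p.2) (U ×ˢ Icc 0 α) ∧
    ∀ u ∈ U, ∀ t ∈ Icc (0:ℝ) α, dist (ψ u t) u ≤ t ∧ δ * t ≤ J u - J (ψ u t)

/-- The weak metric slope `|dJ|(x)` of a (continuous) function `J` at `x`: the supremum of all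
`δ > 0` such that `x` is a `δ`-regular point of `J` (equal to `0` if there is no such `δ`). -/
noncomputable def weakSlope {Y : Type*} [MetricSpace Y] (J : Y → ℝ) (x : Y) : ℝ≥0∞ :=
  ⨆ δ ∈ {δ : ℝ | 0 < δ ∧ IsDeltaRegular J x δ}, ENNReal.ofReal δ

/-- The weak metric Palais–Smale condition: every sequence along which `J` converges to a real
number and the weak metric slope tends to `0` has a convergent subsequence. -/
def WeakPalaisSmale {Y : Type*} [MetricSpace Y] (J : Y → ℝ) : Prop :=
  ∀ (u : ℕ → Y) (c : ℝ),
    Tendsto (fun n => J (u n)) atTop (𝓝 c) →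
    Tendsto (fun n => weakSlope J (u n)) atTop (𝓝 0) →
    ∃ (y : Y) (φ : ℕ → ℕ), StrictMono φ ∧ Tendsto (u ∘ φ) atTop (𝓝 y)

/-- The epigraph `epi(I) = {(u,ξ) : I(u) ≤ ξ}` of a functional `I : X → ℝ ∪ {+∞}`, equipped
(via `WithLp 2`) with the graph metric `d_epi((u,ξ),(v,ζ)) = √(d(u,v)² + |ξ-ζ|²)`. -/
abbrev Epi {X : Type*} [MetricSpace X] (I : X → EReal) : Type _ :=
  {p : WithLp 2 (X × ℝ) //
    I ((WithLp.equiv 2 (X × ℝ)) p).1 ≤ ((((WithLp.equiv 2 (X × ℝ)) p).2 : ℝ) : EReal)}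

/-- The point of an epigraph element `(u, ξ)` of the epigraph of `I`. -/
noncomputable def Epi.pt {X : Type*} [MetricSpace X] {I : X → EReal} (p : Epi I) : X :=
  ((WithLp.equiv 2 (X × ℝ)) p.1).1

/-- Build an element of the epigraph of `I` from `x : X` and `ξ : ℝ` with `I x ≤ ξ`. -/
noncomputable def Epi.mk' {X : Type*} [MetricSpace X] (I : X → EReal) (x : X) (ξ : ℝ)
    (h : I x ≤ (ξ : EReal)) : Epi I :=
  ⟨(WithLp.equiv 2 (X × ℝ)).symm (x, ξ), by simpa using h⟩

/-- The epigraph extension `G_I : epi(I) → ℝ`, `G_I(u,ξ) = ξ`. -/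
noncomputable def epiExt {X : Type*} [MetricSpace X] (I : X → EReal) (p : Epi I) : ℝ :=
  ((WithLp.equiv 2 (X × ℝ)) p.1).2

/-- The weak metric slope `|dI|(x)` of a proper lower semicontinuous functional
`I : X → ℝ ∪ {+∞}` at a point `x ∈ D(I)`, defined through the weak metric slope of the
epigraph extension `G_I` at `(x, I(x))`. -/
noncomputable def lscWeakSlope {X : Type*} [MetricSpace X] (I : X → EReal) (x : X) : ℝ≥0∞ :=
  if hx : I x ≤ (((I x).toReal : ℝ) : EReal) then
    let s := weakSlope (epiExt I) (Epi.mk' I x (I x).toReal hx)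
    if s < 1 then ENNReal.ofReal (s.toReal / Real.sqrt (1 - s.toReal ^ 2)) else ⊤
  else ⊤

/-- The weak metric Palais–Smale condition for a proper l.s.c. functional `I : X → ℝ ∪ {+∞}`. -/
def WeakPalaisSmaleLSC {X : Type*} [MetricSpace X] (I : X → EReal) : Prop :=
  ∀ (u : ℕ → X) (c : ℝ),
    Tendsto (fun n => I (u n)) atTop (𝓝 ((c : EReal))) →
    Tendsto (fun n => lscWeakSlope I (u n)) atTop (𝓝 0) →
    ∃ (y : X) (φ : ℕ → ℕ), StrictMono φ ∧ Tendsto (u ∘ φ) atTop (𝓝 y)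

/-- The (strong) metric slope `|∂J|(x) = limsup_{y → x} (J(x) - J(y))₊ / d(x,y)` of a
real-valued function. -/
noncomputable def metricSlopeReal {Y : Type*} [MetricSpace Y] (J : Y → ℝ) (x : Y) : ℝ≥0∞ :=
  limsup (fun y => ENNReal.ofReal (max (J x - J y) 0 / dist x y)) (𝓝[≠] x)

/-- The (strong) metric slope of a functional `I : X → ℝ ∪ {+∞}`, equal to `+∞` outside of the
domain of `I`. -/
noncomputable def metricSlope {X : Type*} [MetricSpace X] (I : X → EReal) (x : X) : ℝ≥0∞ :=
  if I x = ⊤ then ⊤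
  else limsup (fun y => ENNReal.ofReal ((max (I x - I y) 0).toReal / dist x y)) (𝓝[≠] x)

/-- `γ : [0,1] → Y` is a unit speed minimising geodesic from `x₀` to `x₁`. -/
def IsUnitSpeedGeodesic {Y : Type*} [MetricSpace Y] (γ : ℝ → Y) (x₀ x₁ : Y) : Prop :=
  ContinuousOn γ (Icc 0 1) ∧ γ 0 = x₀ ∧ γ 1 = x₁ ∧
    ∀ s ∈ Icc (0:ℝ) 1, ∀ t ∈ Icc (0:ℝ) 1, dist (γ s) (γ t) = |s - t| * dist x₀ x₁

/-- A geodesic metric space: any two points are joined by a unit speed minimising geodesic. -/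
def IsGeodesicSpace (Y : Type*) [MetricSpace Y] : Prop :=
  ∀ x₀ x₁ : Y, ∃ γ : ℝ → Y, IsUnitSpeedGeodesic γ x₀ x₁

/-- `I` is `λ`-geodesically convex. -/
def GeodesicallyConvex {X : Type*} [MetricSpace X] (I : X → EReal) (lam : ℝ) : Prop :=
  ∀ x₀ x₁ : X, I x₀ ≠ ⊤ → I x₁ ≠ ⊤ →
    ∀ γ : ℝ → X, IsUnitSpeedGeodesic γ x₀ x₁ → ∀ t ∈ Icc (0:ℝ) 1,
      I (γ t) ≤ ((1 - t : ℝ) : EReal) * I x₀ + ((t : ℝ) : EReal) * I x₁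
        - (((lam / 2) * t * (1 - t) * dist x₀ x₁ ^ 2 : ℝ) : EReal)

theorem EReal.le_coe_sub_of_le_sub {a c : EReal} {r ξ : ℝ} (ha : a ≠ ⊥) (hc : c ≠ ⊥)
    (hcξ : c ≤ (ξ : EReal)) (h : (r : EReal) ≤ c - a) : a ≤ ((ξ - r : ℝ) : EReal) := by
  induction c with
  | bot => exact absurd rfl hc
  | top => simp at hcξ
  | coe c =>
    induction a with
    | bot => exact absurd rfl ha
    | top => simp at h
    | coe a =>
      norm_cast at *
      linarith

theorem Epi.dist_eq {X : Type*} [MetricSpace X] {I : X → EReal} (p q : Epi I) :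
    dist p q = √(dist p.pt q.pt ^ 2 + dist (epiExt I p) (epiExt I q) ^ 2) := by
  rw [Subtype.dist_eq, WithLp.prod_dist_eq_add (by norm_num), Real.sqrt_eq_rpow]
  simp only [ENNReal.toReal_ofNat, Real.rpow_ofNat]
  rfl

theorem ofReal_le_weakSlope {Y : Type*} [MetricSpace Y] {J : Y → ℝ} {x : Y} {δ : ℝ}
    (hδ : 0 < δ) (h : IsDeltaRegular J x δ) : ENNReal.ofReal δ ≤ weakSlope J x :=
  le_iSup₂_of_le (f := fun (δ : ℝ) (_ : δ ∈ {δ : ℝ | 0 < δ ∧ IsDeltaRegular J x δ}) =>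
    ENNReal.ofReal δ) δ ⟨hδ, h⟩ le_rfl

/-- The function `s ↦ s / √(1 - s²)` is at least `δ` once `s ≥ δ / √(1 + δ²)`. -/
theorem le_div_sqrt_one_sub_sq {δ s : ℝ} (hδ : 0 < δ) (hs : δ / √(1 + δ ^ 2) ≤ s)
    (hs1 : s < 1) : δ ≤ s / √(1 - s ^ 2) := by
  have hr : 0 < √(1 + δ ^ 2) := by positivity
  have hs0 : 0 < s := lt_of_lt_of_le (by positivity) hs
  have hpos : 0 < 1 - s ^ 2 := by nlinarith
  rw [le_div_iff₀ (Real.sqrt_pos.2 hpos)]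
  refine abs_le_of_sq_le_sq' ?_ hs0.le |>.2
  rw [mul_pow, Real.sq_sqrt hpos.le]
  rw [div_le_iff₀ hr] at hs
  have h2 := pow_le_pow_left₀ hδ.le hs 2
  rw [mul_pow, Real.sq_sqrt (by positivity)] at h2
  linarith

/-- A descent map for `I` on a sublevel set lifts to the epigraph by moving the height
coordinate down at rate `δ`, after rescaling time to keep unit speed. -/
theorem isDeltaRegular_epiExt_of_descent {X : Type*} [MetricSpace X] {I : X → EReal}
    (hbot : ∀ x, I x ≠ ⊥) {x : X} {ξ₀ : ℝ} (hx : I x ≤ (ξ₀ : EReal))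
    {δ b α : ℝ} (hb : ξ₀ < b) (hα : 0 < α)
    {U : Set X} (hU : U ∈ 𝓝 x) {Ψ : X → ℝ → X}
    (hcont : ContinuousOn (fun p : X × ℝ => Ψ p.1 p.2)
      ((U ∩ {u | I u ≤ (b : EReal)}) ×ˢ Icc 0 α))
    (hdist : ∀ u ∈ U ∩ {u | I u ≤ (b : EReal)}, ∀ t ∈ Icc (0:ℝ) α, dist (Ψ u t) u ≤ t)
    (hdec : ∀ u ∈ U ∩ {u | I u ≤ (b : EReal)}, ∀ t ∈ Icc (0:ℝ) α,
      ((δ * t : ℝ) : EReal) ≤ I u - I (Ψ u t)) :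
    IsDeltaRegular (epiExt I) (Epi.mk' I x ξ₀ hx) (δ / √(1 + δ ^ 2)) := by
  classical
  set r := √(1 + δ ^ 2)
  have hr : 0 < r := by positivity
  have hr2 : r ^ 2 = 1 + δ ^ 2 := Real.sq_sqrt (by positivity)
  have hpt : Continuous (Epi.pt : Epi I → X) :=
    continuous_fst.comp ((WithLp.prod_continuous_ofLp 2 X ℝ).comp continuous_subtype_val)
  have hext : Continuous (epiExt I) :=
    continuous_snd.comp ((WithLp.prod_continuous_ofLp 2 X ℝ).comp continuous_subtype_val)
  let V : Set (Epi I) := Epi.pt ⁻¹' U ∩ {p | epiExt I p < b}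
  have hVmem : ∀ p ∈ V, p.pt ∈ U ∩ {u | I u ≤ (b : EReal)} := fun p hp =>
    ⟨hp.1, p.2.trans (EReal.coe_le_coe_iff.2 (le_of_lt hp.2))⟩
  have htime : ∀ t ∈ Icc 0 (α * r), t / r ∈ Icc 0 α := fun t ht =>
    ⟨div_nonneg ht.1 hr.le, (div_le_iff₀ hr).2 ht.2⟩
  have hepi : ∀ p ∈ V, ∀ t ∈ Icc 0 (α * r),
      I (Ψ p.pt (t / r)) ≤ ((epiExt I p - δ * (t / r) : ℝ) : EReal) := fun p hp t ht =>
    EReal.le_coe_sub_of_le_sub (hbot _) (hbot _) p.2 (hdec _ (hVmem p hp) _ (htime t ht))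
  let ψ : Epi I → ℝ → Epi I := fun p t =>
    if h : I (Ψ p.pt (t / r)) ≤ ((epiExt I p - δ * (t / r) : ℝ) : EReal) then
      Epi.mk' I _ _ h else p
  refine ⟨V, ?_, α * r, by positivity, ψ, ?_, ?_⟩
  · exact inter_mem (hpt.continuousAt.preimage_mem_nhds hU)
      (hext.continuousAt.eventually_lt_const hb)
  · refine Topology.IsInducing.subtypeVal.continuousOn_iff.2 ?_
    have key : ContinuousOn (fun q : Epi I × ℝ => WithLp.toLp 2
        (Ψ q.1.pt (q.2 / r), epiExt I q.1 - δ * (q.2 / r))) (V ×ˢ Icc 0 (α * r)) := by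
      refine (WithLp.prod_continuous_toLp 2 X ℝ).comp_continuousOn (ContinuousOn.prodMk ?_ ?_)
      · refine hcont.comp (f := fun q : Epi I × ℝ => (q.1.pt, q.2 / r)) ?_ ?_
        · exact Continuous.continuousOn (by fun_prop)
        · exact fun q hq => ⟨hVmem _ hq.1, htime _ hq.2⟩
      · exact Continuous.continuousOn (by fun_prop)
    refine key.congr fun q hq => ?_
    exact congrArg Subtype.val (dif_pos (hepi _ hq.1 _ hq.2))
  · intro p hp t ht
    have hd := hdist _ (hVmem p hp) _ (htime t ht)
    simp only [ψ, dif_pos (hepi p hp t ht)]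
    constructor
    · rw [Epi.dist_eq]
      change √(dist (Ψ p.pt (t / r)) p.pt ^ 2 +
        dist (epiExt I p - δ * (t / r)) (epiExt I p) ^ 2) ≤ t
      refine Real.sqrt_le_iff.2 ⟨ht.1, ?_⟩
      have h1 := pow_le_pow_left₀ dist_nonneg hd 2
      have h2 : t ^ 2 = (1 + δ ^ 2) * (t / r) ^ 2 := by
        rw [← hr2]; field_simp
      rw [Real.dist_eq, sq_abs, h2]
      linarith
    · change δ / r * t ≤ epiExt I p - (epiExt I p - δ * (t / r))
      apply le_of_eq
      ring

/-- Degiovanni–Marzocchi lower bound on the weak metric slope (Proposition 2.7): if near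
`x ∈ D(I)` there is a continuous map `Ψ` on `(U ∩ {I ≤ b}) × [0,α]` decreasing `I` at rate `δ`
while moving points at speed at most one, then `|dI|(x) ≥ δ`. -/
theorem weakSlope_ge_of_descent {X : Type*} [MetricSpace X] (I : X → EReal)
    (hproper : ∃ x, I x ≠ ⊤) (hbot : ∀ x, I x ≠ ⊥) (hlsc : LowerSemicontinuous I)
    (x : X) (hx : I x ≠ ⊤)
    (δ b α : ℝ) (hδ : 0 < δ) (hb : I x < (b : EReal)) (hα : 0 < α)
    (U : Set X) (hU : U ∈ 𝓝 x)
    (Ψ : X → ℝ → X)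
    (hcont : ContinuousOn (fun p : X × ℝ => Ψ p.1 p.2)
      ((U ∩ {u | I u ≤ (b : EReal)}) ×ˢ Icc 0 α))
    (hdist : ∀ u ∈ U ∩ {u | I u ≤ (b : EReal)}, ∀ t ∈ Icc (0:ℝ) α, dist (Ψ u t) u ≤ t)
    (hdec : ∀ u ∈ U ∩ {u | I u ≤ (b : EReal)}, ∀ t ∈ Icc (0:ℝ) α,
      ((δ * t : ℝ) : EReal) ≤ I u - I (Ψ u t)) :
    ENNReal.ofReal δ ≤ lscWeakSlope I x := by
  have hcoe : (((I x).toReal : ℝ) : EReal) = I x := EReal.coe_toReal hx (hbot x)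
  have hb' : (I x).toReal < b := by rwa [← EReal.coe_lt_coe_iff, hcoe]
  have hslope := ofReal_le_weakSlope (by positivity)
    (isDeltaRegular_epiExt_of_descent hbot hcoe.ge hb' hα hU hcont hdist hdec)
  rw [lscWeakSlope, dif_pos hcoe.ge]
  dsimp only
  split_ifs with hs
  · refine ENNReal.ofReal_le_ofReal (le_div_sqrt_one_sub_sq hδ ?_ ?_)
    · exact (ENNReal.ofReal_le_iff_le_toReal hs.ne_top).1 hslope
    · exact ENNReal.toReal_lt_of_lt_ofReal (by simpa using hs)
  · exact le_top
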